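/- There exists a constant B > 0, depending only on ζ, such that the following holds. Suppose ω₀ ≤ 1 and τ_step ≥ 1. For an admissible Ψ as in the context, write I(τ̄) = ∫_X ∫₀^{2π} Ψ(τ̄,φ,x)² dφ dμ(x) for the slice integral at time τ̄. Then for every τ' ∈ ℝ, ∫_{τ'−1}^{τ'} ∫_X ∫₀^{2π} Ψ_♭(t,φ,x)² dφ dμ(x) dt ≤ B ω₀^{-1} · sup_{τ'−τ_step ≤ τ̄ ≤ τ'+τ_step} I(τ̄) + B ω₀^{-7} · sup_{τ̄ : |τ̄−τ'| ≥ τ_step} (τ_step + |τ̄ − τ'|)^{-6} I(τ̄). -/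

import Mathlib

open MeasureTheory Real ENNReal

/-- The low-pass kernel `K_λ(t) = (2π)⁻¹ λ ∫ ζ(ω) e^{iλωt} dω`. -/
noncomputable def lowPassKernel (ζ : ℝ → ℝ) (lam t : ℝ) : ℂ :=
  ((2 * Real.pi)⁻¹ * lam : ℝ) * ∫ ω : ℝ, (ζ ω : ℂ) * Complex.exp (Complex.I * (lam * ω * t))

/-- The low-pass filtering `K_λ ∗ f` of `f` at scale `λ`. -/
noncomputable def lowPassFilter (ζ : ℝ → ℝ) (lam : ℝ) (f : ℝ → ℂ) (t : ℝ) : ℂ :=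
  ∫ s : ℝ, lowPassKernel ζ lam (t - s) * f s

/-- The `k`-th azimuthal Fourier mode `Ψ_k(t,x) = (2π)⁻¹ ∫₀^{2π} Ψ(t,φ,x) e^{ikφ} dφ`. -/
noncomputable def azMode {X : Type} (Ψ : ℝ → ℝ → X → ℝ) (k : ℤ) (t : ℝ) (x : X) : ℂ :=
  ((2 * Real.pi)⁻¹ : ℝ) *
    ∫ φ in (0 : ℝ)..(2 * Real.pi), (Ψ t φ x : ℂ) * Complex.exp (Complex.I * ((k : ℝ) * φ))

/-- The low-frequency part
`Ψ_♭(t,φ,x) = Σ_{k ≠ 0} e^{-ikφ} (K_{ω₀|k|} ∗ Ψ_k(·,x))(t)`. -/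
noncomputable def lowPart {X : Type} (ζ : ℝ → ℝ) (ω₀ : ℝ) (Ψ : ℝ → ℝ → X → ℝ)
    (t φ : ℝ) (x : X) : ℂ :=
  ∑' k : {k : ℤ // k ≠ 0},
    Complex.exp (-(Complex.I * ((k.1 : ℝ) * φ))) *
      lowPassFilter ζ (ω₀ * |(k.1 : ℝ)|) (fun s => azMode Ψ k.1 s x) t

/-- The high-frequency part `Ψ_♯ = Ψ − Ψ_♭`. -/
noncomputable def highPart {X : Type} (ζ : ℝ → ℝ) (ω₀ : ℝ) (Ψ : ℝ → ℝ → X → ℝ)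
    (t φ : ℝ) (x : X) : ℂ :=
  (Ψ t φ x : ℂ) - lowPart ζ ω₀ Ψ t φ x


lemma kernel_decay (ζ : ℝ → ℝ) (hζ_smooth : ContDiff ℝ (⊤ : ℕ∞) ζ)
    (hζ_supp : Function.support ζ ⊆ Set.Icc (-2) 2) :
    ∃ C : ℝ, 0 < C ∧ ∀ lam t : ℝ, 0 < lam →
      ‖lowPassKernel ζ lam t‖ ≤ C * (lam * ((1 + lam * |t|) ^ 8)⁻¹) := by
  have hc : HasCompactSupport (fun x => (ζ x : ℂ)) := by
    apply HasCompactSupport.of_support_subset_isCompact (isCompact_Icc (a := (-2 : ℝ)) (b := 2))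
    intro x hx
    apply hζ_supp
    simpa using hx
  have hs : ContDiff ℝ (⊤ : ℕ∞) (fun x => (ζ x : ℂ)) := Complex.ofRealCLM.contDiff.comp hζ_smooth
  let f : SchwartzMap ℝ ℂ := hc.toSchwartzMap hs
  let F : SchwartzMap ℝ ℂ := FourierTransform.fourier f
  have hF : ∀ u, F u = ∫ v : ℝ, Complex.exp (↑(-2 * π * v * u) * Complex.I) • (ζ v : ℂ) := by
    intro u
    have : F u = FourierTransform.fourier (f : ℝ → ℂ) u := by
      simp [F, SchwartzMap.fourier_coe]
    rw [this, Real.fourier_real_eq_integral_exp_smul]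
    rfl
  set M := 2 ^ 8 * ((Finset.Iic ((8, 0) : ℕ × ℕ)).sup
    (fun m => SchwartzMap.seminorm ℝ m.1 m.2)) F with hM
  have hMd : ∀ u : ℝ, (1 + ‖u‖) ^ 8 * ‖F u‖ ≤ M := by
    intro u
    have := SchwartzMap.one_add_le_sup_seminorm_apply (𝕜 := ℝ) (m := (8, 0)) (k := 8) (n := 0)
      le_rfl le_rfl F u
    simpa using this
  have hM0 : 0 ≤ M := le_trans (by positivity) (hMd 0)
  refine ⟨(2 * π) ^ 8 * M + 1, by positivity, fun lam t hl => ?_⟩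
  have hK : lowPassKernel ζ lam t = ((2 * Real.pi)⁻¹ * lam : ℝ) * F (-(lam * t) / (2 * π)) := by
    rw [lowPassKernel, hF]
    congr 1
    apply integral_congr_ae
    filter_upwards with v
    rw [smul_eq_mul, mul_comm]
    congr 2
    push_cast
    have : (π : ℂ) ≠ 0 := by exact_mod_cast Real.pi_ne_zero
    field_simp
  rw [hK, norm_mul, Complex.norm_real, Real.norm_of_nonneg (by positivity)]
  have h1 := hMd (-(lam * t) / (2 * π))
  have h2 : ‖-(lam * t) / (2 * π)‖ = lam * |t| / (2 * π) := by
    rw [Real.norm_eq_abs, abs_div, abs_neg, abs_mul, abs_of_pos hl, abs_of_pos (by positivity : 0 < 2 * π)]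
  rw [h2] at h1
  have h2pi : 1 ≤ 2 * π := by linarith [Real.pi_gt_three]
  have h3 : (1 + lam * |t|) ≤ (2 * π) * (1 + lam * |t| / (2 * π)) := by
    have : (2 * π) * (1 + lam * |t| / (2 * π)) = 2 * π + lam * |t| := by field_simp
    linarith
  have h4 : (1 + lam * |t|) ^ 8 * ‖F (-(lam * t) / (2 * π))‖ ≤ (2 * π) ^ 8 * M := by
    calc _ ≤ ((2 * π) * (1 + lam * |t| / (2 * π))) ^ 8 * ‖F (-(lam * t) / (2 * π))‖ := by gcongr
      _ = (2 * π) ^ 8 * ((1 + lam * |t| / (2 * π)) ^ 8 * ‖F (-(lam * t) / (2 * π))‖) := by ring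
      _ ≤ _ := by gcongr
  have h5 : ‖F (-(lam * t) / (2 * π))‖ ≤ ((2 * π) ^ 8 * M + 1) * ((1 + lam * |t|) ^ 8)⁻¹ := by
    rw [← div_eq_mul_inv, le_div_iff₀ (by positivity)]
    linarith
  have h6 : (2 * π)⁻¹ ≤ 1 := inv_le_one_of_one_le₀ h2pi
  calc (2 * π)⁻¹ * lam * ‖F (-(lam * t) / (2 * π))‖ 
      ≤ 1 * lam * (((2 * π) ^ 8 * M + 1) * ((1 + lam * |t|) ^ 8)⁻¹) := by gcongr
    _ = _ := by ring

lemma integrable_w : Integrable (fun x : ℝ => ((1 + |x|) ^ 8)⁻¹) := by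
  have := integrable_one_add_norm (E := ℝ) (μ := volume) (r := 8) (by simp)
  refine this.congr (Filter.Eventually.of_forall fun x => ?_)
  have h : 0 ≤ 1 + ‖x‖ := by positivity
  simp only
  rw [Real.rpow_neg h]
  norm_cast

lemma integrable_w2 : Integrable (fun x : ℝ => ((1 + |x|) ^ 2)⁻¹) := by
  have := integrable_one_add_norm (E := ℝ) (μ := volume) (r := 2) (by simp)
  refine this.congr (Filter.Eventually.of_forall fun x => ?_)
  have h : 0 ≤ 1 + ‖x‖ := by positivity
  simp only
  rw [Real.rpow_neg h]
  norm_cast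

lemma lintegral_g (lam : ℝ) (hl : 0 < lam) :
    ∫⁻ r : ℝ, ENNReal.ofReal (lam * ((1 + lam * |r|) ^ 8)⁻¹) =
      ENNReal.ofReal (∫ x : ℝ, ((1 + |x|) ^ 8)⁻¹) := by
  have e : ∀ r : ℝ, lam * ((1 + lam * |r|) ^ 8)⁻¹ = lam * ((1 + |lam * r|) ^ 8)⁻¹ := by
    intro r; rw [abs_mul, abs_of_pos hl]
  simp_rw [e]
  rw [← ofReal_integral_eq_lintegral_ofReal]
  · rw [integral_const_mul, Measure.integral_comp_mul_left (fun x => ((1 + |x|) ^ 8)⁻¹)]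
    rw [abs_of_pos (by positivity), smul_eq_mul, ← mul_assoc, mul_inv_cancel₀ hl.ne', one_mul]
  · exact (integrable_w.comp_mul_left' hl.ne').const_mul _
  · exact Filter.Eventually.of_forall fun x => by positivity

lemma analysis_bessel (f : ℝ → ℂ) (hf : Continuous f) :
    ENNReal.ofReal (2 * π) * ∑' k : {k : ℤ // k ≠ 0}, (‖((2 * Real.pi)⁻¹ : ℝ) *
      ∫ φ in (0 : ℝ)..(2 * Real.pi), f φ * Complex.exp (Complex.I * ((k.1 : ℝ) * φ))‖₊ : ℝ≥0∞) ^ 2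
      ≤ ∫⁻ φ in Set.Icc 0 (2 * π), (‖f φ‖₊ : ℝ≥0∞) ^ 2 := by
  have hab : (0 : ℝ) < 2 * π := by positivity
  have hfi : IntegrableOn (fun φ => ‖f φ‖ ^ 2) (Set.Ioc 0 (2 * π)) :=
    ((hf.norm.pow 2).integrableOn_Icc).mono_set Set.Ioc_subset_Icc_self
  have hL2 : MemLp f 2 (volume.restrict (Set.Ioc 0 (2 * π))) := by
    rw [memLp_two_iff_integrable_sq_norm hf.aestronglyMeasurable]
    exact hfi
  have hs := hasSum_sq_fourierCoeffOn hab hL2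
  have hco : ∀ k : ℤ, fourierCoeffOn hab f (-k) = ((2 * Real.pi)⁻¹ : ℝ) *
      ∫ φ in (0 : ℝ)..(2 * Real.pi), f φ * Complex.exp (Complex.I * ((k : ℝ) * φ)) := by
    intro k
    rw [fourierCoeffOn_eq_integral, Complex.real_smul]
    congr 1
    · simp
    apply intervalIntegral.integral_congr
    intro φ _
    simp only [neg_neg, fourier_coe_apply, smul_eq_mul, sub_zero]
    rw [mul_comm]
    congr 2
    have : (π : ℂ) ≠ 0 := by exact_mod_cast Real.pi_ne_zero
    push_cast
    field_simp
  simp_rw [← hco]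
  have hE : ∑' k : ℤ, (‖fourierCoeffOn hab f k‖₊ : ℝ≥0∞) ^ 2 =
      ENNReal.ofReal ((2 * π)⁻¹ * ∫ x in (0:ℝ)..(2 * π), ‖f x‖ ^ 2) := by
    have := hs.tsum_eq
    simp only [sub_zero, smul_eq_mul] at this
    rw [← this, ENNReal.ofReal_tsum_of_nonneg (fun _ => by positivity) hs.summable]
    congr 1; ext k
    rw [ENNReal.ofReal_pow (norm_nonneg _), ofReal_norm]; rfl
  have hle : ∑' k : {k : ℤ // k ≠ 0}, (‖fourierCoeffOn hab f (-k.1)‖₊ : ℝ≥0∞) ^ 2 ≤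
      ∑' k : ℤ, (‖fourierCoeffOn hab f k‖₊ : ℝ≥0∞) ^ 2 :=
    ENNReal.tsum_comp_le_tsum_of_injective (f := fun k : {k : ℤ // k ≠ 0} => -k.1)
      (fun a b h => Subtype.ext (neg_injective h)) (fun k => (‖fourierCoeffOn hab f k‖₊ : ℝ≥0∞) ^ 2)
  calc _ ≤ ENNReal.ofReal (2 * π) * ENNReal.ofReal ((2 * π)⁻¹ * ∫ x in (0:ℝ)..(2 * π), ‖f x‖ ^ 2) := by
        rw [← hE]; gcongr
    _ = ENNReal.ofReal (∫ x in (0:ℝ)..(2 * π), ‖f x‖ ^ 2) := by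
        rw [← ENNReal.ofReal_mul hab.le, ← mul_assoc, mul_inv_cancel₀ hab.ne', one_mul]
    _ = ∫⁻ φ in Set.Ioc 0 (2 * π), (‖f φ‖₊ : ℝ≥0∞) ^ 2 := by
        rw [intervalIntegral.integral_of_le hab.le, ofReal_integral_eq_lintegral_ofReal hfi
          (Filter.Eventually.of_forall fun x => by positivity)]
        congr 1; ext k
        rw [ENNReal.ofReal_pow (norm_nonneg _), ofReal_norm]; rfl
    _ ≤ _ := lintegral_mono_set Set.Ioc_subset_Icc_self

lemma lintegral_cs {α : Type*} [MeasurableSpace α] (ν : Measure α) (g h : α → ℝ≥0∞)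
    (hg : Measurable g) (hh : Measurable h) :
    (∫⁻ a, g a * h a ∂ν) ^ 2 ≤ (∫⁻ a, g a ∂ν) * ∫⁻ a, g a * h a ^ 2 ∂ν := by
  have h1 := ENNReal.lintegral_mul_le_Lp_mul_Lq ν (p := 2) (q := 2) Real.HolderConjugate.two_two
    (f := fun a => g a ^ (1/2 : ℝ)) (g := fun a => g a ^ (1/2 : ℝ) * h a)
    (hg.pow_const _).aemeasurable ((hg.pow_const _).mul hh).aemeasurable
  have e0 : ∀ a, g a ^ (1/2 : ℝ) * g a ^ (1/2 : ℝ) = g a := by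
    intro a
    rw [← ENNReal.rpow_add_of_nonneg _ _ (by norm_num) (by norm_num)]
    norm_num
  have e1 : ∀ a, ((fun a => g a ^ (1/2 : ℝ)) * (fun a => g a ^ (1/2 : ℝ) * h a)) a = g a * h a := by
    intro a
    simp only [Pi.mul_apply]
    rw [← mul_assoc, e0]
  have e2 : ∀ a, (g a ^ (1/2 : ℝ)) ^ (2 : ℝ) = g a := by
    intro a
    rw [← ENNReal.rpow_mul]; norm_num
  have e3 : ∀ a, (g a ^ (1/2 : ℝ) * h a) ^ (2 : ℝ) = g a * h a ^ 2 := by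
    intro a
    rw [ENNReal.mul_rpow_of_nonneg _ _ (by norm_num), e2]
    norm_num
  simp_rw [e1, e2, e3] at h1
  calc _ ≤ ((∫⁻ a, g a ∂ν) ^ (1/2 : ℝ) * (∫⁻ a, g a * h a ^ 2 ∂ν) ^ (1/2 : ℝ)) ^ 2 := by gcongr
    _ = _ := by
      rw [mul_pow, ← ENNReal.rpow_natCast, ← ENNReal.rpow_natCast, ← ENNReal.rpow_mul,
        ← ENNReal.rpow_mul]
      norm_num

lemma synthesis (c : {k : ℤ // k ≠ 0} → ℂ) :
    ∫⁻ φ in Set.Icc 0 (2 * π), (‖∑' k : {k : ℤ // k ≠ 0},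
      Complex.exp (-(Complex.I * ((k.1 : ℝ) * (φ : ℂ)))) * c k‖₊ : ℝ≥0∞) ^ 2
      ≤ ENNReal.ofReal (2 * π) * ∑' k, (‖c k‖₊ : ℝ≥0∞) ^ 2 := by
  have : Fact (0 < 2 * π) := ⟨by positivity⟩
  have hn : ∀ (k : {k : ℤ // k ≠ 0}) (φ : ℝ),
      ‖Complex.exp (-(Complex.I * ((k.1 : ℝ) * (φ : ℂ)))) * c k‖ = ‖c k‖ := by
    intro k φ
    have : (-(Complex.I * ((k.1 : ℝ) * (φ : ℂ)))) = ((-(k.1 * φ) : ℝ) : ℂ) * Complex.I := by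
      push_cast; ring
    rw [norm_mul, this, Complex.norm_exp_ofReal_mul_I, one_mul]
  by_cases hc : Summable (fun k => ‖c k‖)
  swap
  · have h0 : ∀ φ : ℝ, ∑' k : {k : ℤ // k ≠ 0},
      Complex.exp (-(Complex.I * ((k.1 : ℝ) * (φ : ℂ)))) * c k = 0 := by
      intro φ
      apply tsum_eq_zero_of_not_summable
      intro h
      apply hc
      have := h.norm
      simpa only [hn] using this
    simp_rw [h0]
    simp
  let F : {k : ℤ // k ≠ 0} → C(AddCircle (2 * π), ℂ) := fun k => c k • fourier (-k.1)
  have hF : Summable F := by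
    apply Summable.of_norm
    simpa [F, norm_smul, fourier_norm] using hc
  let f := ∑' k, F k
  have hf : HasSum F f := hF.hasSum
  have hval : ∀ φ : ℝ, ∑' k : {k : ℤ // k ≠ 0},
      Complex.exp (-(Complex.I * ((k.1 : ℝ) * (φ : ℂ)))) * c k = f (φ : AddCircle (2 * π)) := by
    intro φ
    rw [← (ContinuousMap.hasSum_apply hf (φ : AddCircle (2 * π))).tsum_eq]
    congr 1; ext k
    simp only [F, ContinuousMap.smul_apply, fourier_coe_apply, smul_eq_mul]
    rw [mul_comm]
    congr 2
    have : (π : ℂ) ≠ 0 := by exact_mod_cast Real.pi_ne_zero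
    push_cast
    field_simp
  simp_rw [hval]
  let T := ContinuousMap.toLp (E := ℂ) 2 (AddCircle.haarAddCircle (T := 2 * π)) ℂ
  have hTf : HasSum (fun k : {k : ℤ // k ≠ 0} => c k • fourierLp (T := 2 * π) 2 (-k.1)) (T f) := by
    have := hf.mapL T
    simpa [F, T, fourierLp] using this
  have hon : Orthonormal ℂ (fun k : {k : ℤ // k ≠ 0} => fourierLp (T := 2 * π) 2 (-k.1)) :=
    orthonormal_fourier.comp (fun k : {k : ℤ // k ≠ 0} => -k.1)
      (fun a b h => Subtype.ext (neg_injective h))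
  have hTn : ‖T f‖ₑ ^ 2 ≤ ∑' k, (‖c k‖₊ : ℝ≥0∞) ^ 2 := by
    have ht : Filter.Tendsto (fun s : Finset {k : ℤ // k ≠ 0} =>
        ‖∑ k ∈ s, c k • fourierLp (T := 2 * π) 2 (-k.1)‖ₑ ^ 2) Filter.atTop (nhds (‖T f‖ₑ ^ 2)) :=
      ((ENNReal.continuous_pow 2).tendsto _).comp ((continuous_enorm.tendsto _).comp hTf)
    refine le_of_tendsto ht (Filter.Eventually.of_forall fun s => ?_)
    have h1 : ‖∑ k ∈ s, c k • fourierLp (T := 2 * π) 2 (-k.1)‖ ^ 2 = ∑ k ∈ s, ‖c k‖ ^ 2 := by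
      have := hon.inner_sum c c s
      have h2 := inner_self_eq_norm_sq_to_K (𝕜 := ℂ) (∑ k ∈ s, c k • fourierLp (T := 2 * π) 2 (-k.1))
      rw [this] at h2
      have h3 : ∑ i ∈ s, (starRingEnd ℂ) (c i) * c i = ((∑ k ∈ s, ‖c k‖ ^ 2 : ℝ) : ℂ) := by
        push_cast
        refine Finset.sum_congr rfl fun k _ => ?_
        rw [Complex.conj_mul']
      rw [h3] at h2
      apply Complex.ofReal_injective
      rw [h2]
      exact Complex.ofReal_pow _ _
    have h4 : ‖∑ k ∈ s, c k • fourierLp (T := 2 * π) 2 (-k.1)‖ₑ ^ 2 = ∑ k ∈ s, (‖c k‖₊ : ℝ≥0∞) ^ 2 := by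
      rw [← ofReal_norm, ← ENNReal.ofReal_pow (norm_nonneg _), h1, ENNReal.ofReal_sum_of_nonneg
        (fun _ _ => by positivity)]
      refine Finset.sum_congr rfl fun k _ => ?_
      rw [ENNReal.ofReal_pow (norm_nonneg _), ofReal_norm]; rfl
    rw [h4]
    exact ENNReal.sum_le_tsum s
  have hint : ∫⁻ b : AddCircle (2 * π), (‖f b‖₊ : ℝ≥0∞) ^ 2 = ENNReal.ofReal (2 * π) * ‖T f‖ₑ ^ 2 := by
    rw [AddCircle.volume_eq_smul_haarAddCircle, lintegral_smul_measure, smul_eq_mul]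
    congr 1
    rw [Lp.enorm_def, eLpNorm_congr_ae (ContinuousMap.coeFn_toLp (E := ℂ) (p := 2) (𝕜 := ℂ) AddCircle.haarAddCircle f),
      eLpNorm_eq_lintegral_rpow_enorm_toReal (by norm_num) (by norm_num), ← ENNReal.rpow_natCast, ← ENNReal.rpow_mul]
    norm_num
    rfl
  have := AddCircle.lintegral_preimage (2 * π) 0 (fun b => (‖f b‖₊ : ℝ≥0∞) ^ 2)
  rw [zero_add] at this
  rw [← restrict_Ioc_eq_restrict_Icc, this, hint]
  gcongr


lemma weight_bound (J : ℝ) (hJ : J = ∫ x : ℝ, ((1 + |x|) ^ 8)⁻¹) (hJ0 : 0 ≤ J) (n : ℕ) (hn : n ≤ 7)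
    (lam ω₀ τ' s : ℝ) (hω : 0 < ω₀) (hω1 : ω₀ ≤ 1) (hl : ω₀ ≤ lam) :
    ∫⁻ t in Set.Icc (τ' - 1) τ', ENNReal.ofReal (lam * ((1 + lam * |t - s|) ^ 8)⁻¹) ≤
      ENNReal.ofReal ((J + 1) * 3 ^ 8 * ((ω₀ ^ n)⁻¹ * ((1 + |s - τ'|) ^ (n + 1))⁻¹)) := by
  have hl0 : 0 < lam := lt_of_lt_of_le hω hl
  have h38 : (3 : ℝ) ^ (n + 1) ≤ 3 ^ 8 := pow_le_pow_right₀ (by norm_num) (by lia)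
  by_cases hs : |s - τ'| ≤ 2
  · calc _ ≤ ∫⁻ t, ENNReal.ofReal (lam * ((1 + lam * |t - s|) ^ 8)⁻¹) := setLIntegral_le_lintegral _ _
      _ = ENNReal.ofReal J := by
        rw [lintegral_sub_right_eq_self (fun r => ENNReal.ofReal (lam * ((1 + lam * |r|) ^ 8)⁻¹)) s,
          lintegral_g lam hl0, hJ]
      _ ≤ _ := by
        apply ENNReal.ofReal_le_ofReal
        have h1 : (1 + |s - τ'|) ^ (n + 1) ≤ 3 ^ 8 := by
          refine le_trans ?_ h38
          gcongr
          linarith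
        have h2 : 1 ≤ 3 ^ 8 * ((1 + |s - τ'|) ^ (n + 1))⁻¹ := by
          rw [← div_eq_mul_inv, le_div_iff₀ (by positivity)]
          linarith
        have h3 : 1 ≤ (ω₀ ^ n)⁻¹ := by
          apply (one_le_inv₀ (by positivity)).2
          exact pow_le_one₀ hω.le hω1
        have h4 : 1 ≤ (ω₀ ^ n)⁻¹ * (3 ^ 8 * ((1 + |s - τ'|) ^ (n + 1))⁻¹) := one_le_mul_of_one_le_of_one_le h3 h2
        calc J ≤ (J + 1) * 1 := by linarith
          _ ≤ (J + 1) * ((ω₀ ^ n)⁻¹ * (3 ^ 8 * ((1 + |s - τ'|) ^ (n + 1))⁻¹)) := by gcongr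
          _ = _ := by ring
  · push Not at hs
    have hpt : ∀ t ∈ Set.Icc (τ' - 1) τ', ENNReal.ofReal (lam * ((1 + lam * |t - s|) ^ 8)⁻¹) ≤
        ENNReal.ofReal ((J + 1) * 3 ^ 8 * ((ω₀ ^ n)⁻¹ * ((1 + |s - τ'|) ^ (n + 1))⁻¹)) := by
      intro t ht
      apply ENNReal.ofReal_le_ofReal
      have hr : (1 + |s - τ'|) / 3 ≤ |t - s| := by
        have : |s - τ'| ≤ |t - s| + 1 := by
          have h1 : |t - τ'| ≤ 1 := by
            rw [abs_le]; constructor <;> linarith [ht.1, ht.2]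
          have h2 : |s - τ'| ≤ |s - t| + |t - τ'| := abs_sub_le _ _ _
          rw [abs_sub_comm s t] at h2
          linarith
        linarith
      set q := 1 + |s - τ'| with hq
      have hq0 : 0 < q := by positivity
      have hr0 : 0 < |t - s| := lt_of_lt_of_le (by positivity) hr
      have h1 : (lam * |t - s|) ^ (n + 1) ≤ (1 + lam * |t - s|) ^ 8 :=
        calc _ ≤ (1 + lam * |t - s|) ^ (n + 1) := by gcongr; linarith
          _ ≤ _ := pow_le_pow_right₀ (by nlinarith) (by lia)
      calc lam * ((1 + lam * |t - s|) ^ 8)⁻¹ ≤ lam * ((lam * |t - s|) ^ (n + 1))⁻¹ := by gcongr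
        _ = (lam ^ n)⁻¹ * (|t - s| ^ (n + 1))⁻¹ := by
          rw [mul_pow, pow_succ lam n]; field_simp
        _ ≤ (ω₀ ^ n)⁻¹ * ((q / 3) ^ (n + 1))⁻¹ := by gcongr
        _ = 3 ^ (n + 1) * ((ω₀ ^ n)⁻¹ * (q ^ (n + 1))⁻¹) := by rw [div_pow]; field_simp
        _ ≤ ((J + 1) * 3 ^ 8) * ((ω₀ ^ n)⁻¹ * (q ^ (n + 1))⁻¹) := by
          gcongr
          nlinarith
    calc _ ≤ ∫⁻ t in Set.Icc (τ' - 1) τ', ENNReal.ofReal ((J + 1) * 3 ^ 8 * ((ω₀ ^ n)⁻¹ * ((1 + |s - τ'|) ^ (n + 1))⁻¹)) :=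
          setLIntegral_mono measurable_const hpt
      _ = _ := by simp

lemma final_split (E J2 : ℝ) (hE : 0 ≤ E) (hJ2 : J2 = ∫ x : ℝ, ((1 + |x|) ^ 2)⁻¹) (hJ0 : 0 ≤ J2)
    (ω₀ τstep τ' : ℝ) (hω : 0 < ω₀) (hτ : 1 ≤ τstep) (H W : ℝ → ℝ≥0∞)
    (hW1 : ∀ s, W s ≤ ENNReal.ofReal (E * ((ω₀ ^ 1)⁻¹ * ((1 + |s - τ'|) ^ (1 + 1))⁻¹)))
    (hW7 : ∀ s, W s ≤ ENNReal.ofReal (E * ((ω₀ ^ 7)⁻¹ * ((1 + |s - τ'|) ^ (7 + 1))⁻¹))) :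
    ∫⁻ s, H s * W s ≤ ENNReal.ofReal ((E * 64 * J2) / ω₀) * (⨆ τbar : ℝ, ⨆ (_ : |τbar - τ'| ≤ τstep), H τbar)
      + ENNReal.ofReal ((E * 64 * J2) / ω₀ ^ 7) * (⨆ τbar : ℝ, ⨆ (_ : τstep ≤ |τbar - τ'|),
                  ENNReal.ofReal (((τstep + |τbar - τ'|) ^ 6)⁻¹) * H τbar) := by
  set S1 := ⨆ τbar : ℝ, ⨆ (_ : |τbar - τ'| ≤ τstep), H τbar
  set S2 := ⨆ τbar : ℝ, ⨆ (_ : τstep ≤ |τbar - τ'|),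
                  ENNReal.ofReal (((τstep + |τbar - τ'|) ^ 6)⁻¹) * H τbar
  have hJ : ∫⁻ s : ℝ, ENNReal.ofReal (((1 + |s - τ'|) ^ 2)⁻¹) = ENNReal.ofReal J2 := by
    rw [lintegral_sub_right_eq_self (fun r => ENNReal.ofReal (((1 + |r|) ^ 2)⁻¹)) τ', hJ2,
      ofReal_integral_eq_lintegral_ofReal integrable_w2]
    exact Filter.Eventually.of_forall fun x => by positivity
  have hm : Measurable fun s : ℝ => ENNReal.ofReal (((1 + |s - τ'|) ^ 2)⁻¹) := by fun_prop
  have gen : ∀ (D : ℝ) (S : ℝ≥0∞) (A : Set ℝ), 0 ≤ D →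
      ∫⁻ s in A, S * ENNReal.ofReal (D * ((1 + |s - τ'|) ^ 2)⁻¹) ≤ ENNReal.ofReal (D * J2) * S := by
    intro D S A hD
    calc _ ≤ ∫⁻ s, S * ENNReal.ofReal (D * ((1 + |s - τ'|) ^ 2)⁻¹) := setLIntegral_le_lintegral _ _
      _ = ∫⁻ s, S * (ENNReal.ofReal D * ENNReal.ofReal (((1 + |s - τ'|) ^ 2)⁻¹)) := by
        simp_rw [ENNReal.ofReal_mul hD]
      _ = _ := by
        rw [lintegral_const_mul _ (by fun_prop), lintegral_const_mul _ hm, hJ,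
          ENNReal.ofReal_mul hD, mul_comm]
  set A : Set ℝ := {s | |s - τ'| ≤ τstep} with hA
  have hAm : MeasurableSet A := measurableSet_le (by fun_prop) measurable_const
  rw [← lintegral_add_compl _ hAm]
  refine add_le_add ?_ ?_
  · calc _ ≤ ∫⁻ s in A, S1 * ENNReal.ofReal ((E * 64 / ω₀) * ((1 + |s - τ'|) ^ 2)⁻¹) := by
          refine setLIntegral_mono' hAm fun s hs => ?_
          refine mul_le_mul' (le_iSup₂_of_le s hs le_rfl) ((hW1 s).trans ?_)
          apply ENNReal.ofReal_le_ofReal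
          calc E * ((ω₀ ^ 1)⁻¹ * ((1 + |s - τ'|) ^ (1 + 1))⁻¹) = (E * 1 / ω₀) * ((1 + |s - τ'|) ^ 2)⁻¹ := by
                rw [pow_one]; ring
            _ ≤ _ := by gcongr; norm_num
      _ ≤ _ := by
          refine (gen _ _ _ (by positivity)).trans_eq ?_
          congr 2; ring
  · calc _ ≤ ∫⁻ s in Aᶜ, S2 * ENNReal.ofReal ((E * 64 / ω₀ ^ 7) * ((1 + |s - τ'|) ^ 2)⁻¹) := by
          refine setLIntegral_mono' hAm.compl fun s hs => ?_
          have hs' : τstep < |s - τ'| := by simpa [hA] using hs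
          set r := |s - τ'| with hr
          have hr0 : 0 < r := by linarith
          have h1 : ENNReal.ofReal (((τstep + r) ^ 6)⁻¹) * H s ≤ S2 :=
            le_iSup₂_of_le (f := fun (τbar : ℝ) (_ : τstep ≤ |τbar - τ'|) =>
                  ENNReal.ofReal (((τstep + |τbar - τ'|) ^ 6)⁻¹) * H τbar) s hs'.le le_rfl
          calc H s * W s ≤ H s * ENNReal.ofReal (((τstep + r) ^ 6)⁻¹ * ((E * 64 / ω₀ ^ 7) * ((1 + r) ^ 2)⁻¹)) := by
                gcongr
                refine (hW7 s).trans (ENNReal.ofReal_le_ofReal ?_)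
                rw [← hr]
                have h2 : (τstep + r) ^ 6 ≤ 64 * (1 + r) ^ 6 := by
                  calc _ ≤ (2 * (1 + r)) ^ 6 := by gcongr; linarith
                    _ = _ := by ring
                have h3 : ((1 + r) ^ 6)⁻¹ ≤ 64 * ((τstep + r) ^ 6)⁻¹ := by
                  rw [← div_eq_mul_inv, le_div_iff₀ (by positivity), inv_mul_le_iff₀ (by positivity)]
                  linarith
                calc E * ((ω₀ ^ 7)⁻¹ * ((1 + r) ^ (7 + 1))⁻¹) 
                    = (E * (ω₀ ^ 7)⁻¹ * ((1 + r) ^ 2)⁻¹) * ((1 + r) ^ 6)⁻¹ := by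
                      field_simp
                  _ ≤ (E * (ω₀ ^ 7)⁻¹ * ((1 + r) ^ 2)⁻¹) * (64 * ((τstep + r) ^ 6)⁻¹) := by gcongr
                  _ = _ := by ring
            _ = (ENNReal.ofReal (((τstep + r) ^ 6)⁻¹) * H s) * ENNReal.ofReal ((E * 64 / ω₀ ^ 7) * ((1 + r) ^ 2)⁻¹) := by
                rw [ENNReal.ofReal_mul (by positivity)]; ring
            _ ≤ _ := by gcongr
      _ ≤ _ := by
          refine (gen _ _ _ (by positivity)).trans_eq ?_
          congr 2; ring

lemma filter_bound (ζ : ℝ → ℝ) (C J : ℝ) (hC : 0 < C) (hJ : J = ∫ x : ℝ, ((1 + |x|) ^ 8)⁻¹)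
    (hK : ∀ lam t : ℝ, 0 < lam →
      ‖lowPassKernel ζ lam t‖ ≤ C * (lam * ((1 + lam * |t|) ^ 8)⁻¹))
    (lam t : ℝ) (hl : 0 < lam) (f : ℝ → ℂ) (hf : Measurable f) :
    (‖lowPassFilter ζ lam f t‖₊ : ℝ≥0∞) ^ 2 ≤ ENNReal.ofReal (C ^ 2 * J) *
      ∫⁻ s, ENNReal.ofReal (lam * ((1 + lam * |t - s|) ^ 8)⁻¹) * (‖f s‖₊ : ℝ≥0∞) ^ 2 := by
  set g : ℝ → ℝ≥0∞ := fun s => ENNReal.ofReal (lam * ((1 + lam * |t - s|) ^ 8)⁻¹) with hg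
  have hgm : Measurable g := by fun_prop
  have hgi : ∫⁻ s, g s = ENNReal.ofReal J := by
    simp only [hg]
    rw [lintegral_sub_left_eq_self (fun r => ENNReal.ofReal (lam * ((1 + lam * |r|) ^ 8)⁻¹)) t,
      lintegral_g lam hl, hJ]
  have h1 : (‖lowPassFilter ζ lam f t‖₊ : ℝ≥0∞) ≤ ENNReal.ofReal C * ∫⁻ s, g s * ‖f s‖ₑ := by
    calc _ ≤ ∫⁻ s, ‖lowPassKernel ζ lam (t - s) * f s‖ₑ := enorm_integral_le_lintegral_enorm _
      _ ≤ ∫⁻ s, ENNReal.ofReal C * (g s * ‖f s‖ₑ) := by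
        refine lintegral_mono fun s => ?_
        rw [enorm_mul, ← mul_assoc, ← ENNReal.ofReal_mul hC.le]
        gcongr
        rw [← ofReal_norm]
        exact ENNReal.ofReal_le_ofReal (hK lam (t - s) hl)
      _ = _ := lintegral_const_mul _ (hgm.mul hf.enorm)
  calc _ ≤ (ENNReal.ofReal C * ∫⁻ s, g s * ‖f s‖ₑ) ^ 2 := by gcongr
    _ = ENNReal.ofReal (C ^ 2) * (∫⁻ s, g s * ‖f s‖ₑ) ^ 2 := by
      rw [mul_pow, ENNReal.ofReal_pow hC.le]
    _ ≤ ENNReal.ofReal (C ^ 2) * ((∫⁻ s, g s) * ∫⁻ s, g s * ‖f s‖ₑ ^ 2) := by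
      gcongr
      exact lintegral_cs _ _ _ hgm hf.enorm
    _ = _ := by
      rw [hgi, ← mul_assoc, ← ENNReal.ofReal_mul (by positivity)]
      rfl

lemma azMode_measurable {X : Type} [MeasurableSpace X] (Ψ : ℝ → ℝ → X → ℝ)
    (hm : Measurable (fun p : ℝ × ℝ × X => Ψ p.1 p.2.1 p.2.2)) (k : ℤ) :
    Measurable (fun p : ℝ × X => azMode Ψ k p.1 p.2) := by
  unfold azMode
  apply Measurable.const_mul
  have hpi : (0 : ℝ) ≤ 2 * π := by positivity
  simp_rw [intervalIntegral.integral_of_le hpi]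
  apply StronglyMeasurable.measurable
  apply StronglyMeasurable.integral_prod_right (f := fun (p : ℝ × X) (φ : ℝ) =>
    (Ψ p.1 φ p.2 : ℂ) * Complex.exp (Complex.I * ((k : ℝ) * φ)))
  apply Measurable.stronglyMeasurable
  apply Measurable.mul
  · apply Complex.measurable_ofReal.comp
    exact hm.comp (by fun_prop : Measurable fun q : (ℝ × X) × ℝ => (q.1.1, q.2, q.1.2))
  · fun_prop

lemma swap_triple {X : Type} [MeasurableSpace X] (μ : Measure X) [SigmaFinite μ]
    (ν : Measure ℝ) [SigmaFinite ν] (g : ℝ → ℝ → ℝ≥0∞) (hg : Measurable (Function.uncurry g))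
    (a : ℝ → X → ℝ≥0∞) (ha : Measurable (Function.uncurry a)) :
    ∫⁻ t, (∫⁻ x, (∫⁻ s, g t s * a s x) ∂μ) ∂ν = ∫⁻ s, ∫⁻ x, a s x * ∫⁻ t, g t s ∂ν ∂μ := by
  have m1 : Measurable fun p : (ℝ × X) × ℝ => g p.1.1 p.2 * a p.2 p.1.2 :=
    (hg.comp (by fun_prop : Measurable fun p : (ℝ × X) × ℝ => (p.1.1, p.2))).mul
      (ha.comp (by fun_prop : Measurable fun p : (ℝ × X) × ℝ => (p.2, p.1.2)))
  calc _ = ∫⁻ t, (∫⁻ s, (∫⁻ x, g t s * a s x ∂μ)) ∂ν := by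
        refine lintegral_congr fun t => ?_
        rw [lintegral_lintegral_swap]
        exact (m1.comp (by fun_prop : Measurable fun p : X × ℝ => ((t, p.1), p.2))).aemeasurable
    _ = ∫⁻ s, ∫⁻ t, ∫⁻ x, g t s * a s x ∂μ ∂ν := by
        rw [lintegral_lintegral_swap]
        refine Measurable.aemeasurable ?_
        refine Measurable.lintegral_prod_right' (f := fun q : (ℝ × ℝ) × X => g q.1.1 q.1.2 * a q.1.2 q.2) ?_
        exact m1.comp (by fun_prop : Measurable fun p : (ℝ × ℝ) × X => ((p.1.1, p.2), p.1.2))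
    _ = ∫⁻ s, ∫⁻ x, ∫⁻ t, g t s * a s x ∂ν ∂μ := by
        refine lintegral_congr fun s => ?_
        rw [lintegral_lintegral_swap]
        exact (m1.comp (by fun_prop : Measurable fun p : ℝ × X => ((p.1, p.2), s))).aemeasurable
    _ = _ := by
        refine lintegral_congr fun s => lintegral_congr fun x => ?_
        rw [lintegral_mul_const, mul_comm]
        exact hg.comp (by fun_prop : Measurable fun t : ℝ => (t, s))

lemma meas_ga {X : Type} [MeasurableSpace X] (g : ℝ → ℝ → ℝ≥0∞)
    (hg : Measurable (Function.uncurry g))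
    (a : ℝ → X → ℝ≥0∞) (ha : Measurable (Function.uncurry a)) :
    Measurable fun p : ℝ × X => ∫⁻ s, g p.1 s * a s p.2 := by
  have m1 : Measurable fun p : (ℝ × X) × ℝ => g p.1.1 p.2 * a p.2 p.1.2 :=
    (hg.comp (by fun_prop : Measurable fun p : (ℝ × X) × ℝ => (p.1.1, p.2))).mul
      (ha.comp (by fun_prop : Measurable fun p : (ℝ × X) × ℝ => (p.2, p.1.2)))
  exact m1.lintegral_prod_right'

lemma meas_aw {X : Type} [MeasurableSpace X] (w : ℝ → ℝ≥0∞) (hw : Measurable w)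
    (a : ℝ → X → ℝ≥0∞) (ha : Measurable (Function.uncurry a)) :
    Measurable fun p : ℝ × X => a p.1 p.2 * w p.1 :=
  ha.mul (hw.comp measurable_fst)

set_option maxHeartbeats 1000000 in
/-- There is `B > 0` (depending only on `ζ`) such that if `ω₀ ≤ 1` and `τ_step ≥ 1`, then,
writing `I(τ̄) = ∫_X∫₀^{2π} Ψ(τ̄,φ,x)² dφ dμ`, for every admissible `Ψ` and every `τ'`:
`∫_{τ'−1}^{τ'}∫_X∫₀^{2π} Ψ_♭² ≤ B ω₀⁻¹ sup_{|τ̄−τ'| ≤ τ_step} I(τ̄)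
  + B ω₀⁻⁷ sup_{|τ̄−τ'| ≥ τ_step} (τ_step + |τ̄−τ'|)⁻⁶ I(τ̄)`. -/
theorem window_L2_bound_lowPart
    (ζ : ℝ → ℝ) (hζ_smooth : ContDiff ℝ (⊤ : ℕ∞) ζ) (hζ_even : ∀ x, ζ (-x) = ζ x)
    (hζ_supp : Function.support ζ ⊆ Set.Icc (-2) 2)
    (hζ_one : ∀ x ∈ Set.Icc (-1 : ℝ) 1, ζ x = 1) :
    ∃ B : ℝ, 0 < B ∧
      ∀ (X : Type) (_ : MeasurableSpace X) (μ : Measure X), SigmaFinite μ →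
      ∀ ω₀ : ℝ, 0 < ω₀ → ω₀ ≤ 1 →
      ∀ τstep : ℝ, 1 ≤ τstep →
      ∀ Ψ : ℝ → ℝ → X → ℝ,
        -- admissibility: joint measurability
        Measurable (fun p : ℝ × ℝ × X => Ψ p.1 p.2.1 p.2.2) →
        -- admissibility: smoothness in (t, φ) for each fixed x
        (∀ x, ContDiff ℝ (⊤ : ℕ∞) fun p : ℝ × ℝ => Ψ p.1 p.2 x) →
        -- admissibility: 2π-periodicity in φ
        (∀ t φ x, Ψ t (φ + 2 * Real.pi) x = Ψ t φ x) →
        -- admissibility: compact support in t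
        (∃ T : ℝ, ∀ t φ x, T < |t| → Ψ t φ x = 0) →
        -- admissibility: the integrals appearing in the statement are finite
        (∀ τ₁ τ₂ : ℝ,
          (∫⁻ t in Set.Icc τ₁ τ₂, (∫⁻ x, (∫⁻ φ in Set.Icc 0 (2 * Real.pi),
            (‖lowPart ζ ω₀ Ψ t φ x‖₊ : ℝ≥0∞) ^ 2) ∂μ)) < ⊤) →
        (∀ τbar : ℝ,
          (∫⁻ x, (∫⁻ φ in Set.Icc 0 (2 * Real.pi),
            (‖Ψ τbar φ x‖₊ : ℝ≥0∞) ^ 2) ∂μ) < ⊤) →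
      ∀ τ' : ℝ,
        (∫⁻ t in Set.Icc (τ' - 1) τ', (∫⁻ x, (∫⁻ φ in Set.Icc 0 (2 * Real.pi),
            (‖lowPart ζ ω₀ Ψ t φ x‖₊ : ℝ≥0∞) ^ 2) ∂μ))
          ≤ ENNReal.ofReal (B / ω₀) *
              (⨆ τbar : ℝ, ⨆ (_ : |τbar - τ'| ≤ τstep),
                ∫⁻ x, (∫⁻ φ in Set.Icc 0 (2 * Real.pi),
                  (‖Ψ τbar φ x‖₊ : ℝ≥0∞) ^ 2) ∂μ)
            + ENNReal.ofReal (B / ω₀ ^ 7) *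
                (⨆ τbar : ℝ, ⨆ (_ : τstep ≤ |τbar - τ'|),
                  ENNReal.ofReal (((τstep + |τbar - τ'|) ^ 6)⁻¹) *
                    ∫⁻ x, (∫⁻ φ in Set.Icc 0 (2 * Real.pi),
                      (‖Ψ τbar φ x‖₊ : ℝ≥0∞) ^ 2) ∂μ) := by
  obtain ⟨C, hC, hK⟩ := kernel_decay ζ hζ_smooth hζ_supp
  obtain ⟨J, hJ⟩ : ∃ J : ℝ, J = ∫ x : ℝ, ((1 + |x|) ^ 8)⁻¹ := ⟨_, rfl⟩
  obtain ⟨J2, hJ2⟩ : ∃ J : ℝ, J = ∫ x : ℝ, ((1 + |x|) ^ 2)⁻¹ := ⟨_, rfl⟩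
  have hJ0 : 0 ≤ J := hJ ▸ integral_nonneg fun x => by positivity
  have hJ20 : 0 ≤ J2 := hJ2 ▸ integral_nonneg fun x => by positivity
  obtain ⟨E, hE⟩ : ∃ E : ℝ, E = (J + 1) * 3 ^ 8 := ⟨_, rfl⟩
  have hE0 : 0 ≤ E := by rw [hE]; positivity
  refine ⟨C ^ 2 * J * (E * 64 * J2) + 1, by positivity, ?_⟩
  intro X _ μ hμ ω₀ hω hω1 τstep hτ Ψ hm hsm _ _ _ _ τ'
  obtain ⟨H, hH⟩ : ∃ H : ℝ → ℝ≥0∞, ∀ τbar, H τbar = ∫⁻ x, (∫⁻ φ in Set.Icc 0 (2 * Real.pi),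
      (‖Ψ τbar φ x‖₊ : ℝ≥0∞) ^ 2) ∂μ := ⟨_, fun _ => rfl⟩
  simp_rw [← hH]
  let lam : {k : ℤ // k ≠ 0} → ℝ := fun k => ω₀ * |(k.1 : ℝ)|
  have hlam : ∀ k, ω₀ ≤ lam k := by
    intro k
    have : (1 : ℝ) ≤ |(k.1 : ℝ)| := by exact_mod_cast Int.one_le_abs k.2
    exact le_mul_of_one_le_right hω.le this
  let g : {k : ℤ // k ≠ 0} → ℝ → ℝ → ℝ≥0∞ := fun k t s =>
    ENNReal.ofReal (lam k * ((1 + lam k * |t - s|) ^ 8)⁻¹)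
  let a : {k : ℤ // k ≠ 0} → ℝ → X → ℝ≥0∞ := fun k s x => (‖azMode Ψ k.1 s x‖₊ : ℝ≥0∞) ^ 2
  have hgm : ∀ k, Measurable (Function.uncurry (g k)) := by
    intro k; simp only [g, Function.uncurry_def]; fun_prop
  have ham : ∀ k, Measurable (Function.uncurry (a k)) := by
    intro k
    exact (azMode_measurable Ψ hm k.1).enorm.pow_const 2
  let w : {k : ℤ // k ≠ 0} → ℝ → ℝ≥0∞ := fun k s => ∫⁻ t in Set.Icc (τ' - 1) τ', g k t s
  let W : ℝ → ℝ≥0∞ := fun s => ⨆ k, w k s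
  have hwm : ∀ k, Measurable (w k) := fun k => (hgm k).lintegral_prod_left
  have hW : ∀ n : ℕ, n ≤ 7 → ∀ s,
      W s ≤ ENNReal.ofReal (E * ((ω₀ ^ n)⁻¹ * ((1 + |s - τ'|) ^ (n + 1))⁻¹)) := fun n hn s =>
    iSup_le fun k => hE ▸ weight_bound J hJ hJ0 n hn (lam k) ω₀ τ' s hω hω1 (hlam k)
  have hbes : ∀ s x, ENNReal.ofReal (2 * π) * ∑' k, a k s x ≤
      ∫⁻ φ in Set.Icc 0 (2 * Real.pi), (‖Ψ s φ x‖₊ : ℝ≥0∞) ^ 2 := by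
    intro s x
    have hcont : Continuous fun φ : ℝ => (Ψ s φ x : ℂ) :=
      Complex.continuous_ofReal.comp ((hsm x).continuous.comp (by fun_prop : Continuous fun φ : ℝ => (s, φ)))
    have := analysis_bessel (fun φ => (Ψ s φ x : ℂ)) hcont
    simpa only [a, azMode, Complex.nnnorm_real] using this
  obtain ⟨D, hD⟩ : ∃ D : ℝ≥0∞, D = ENNReal.ofReal (C ^ 2 * J) := ⟨_, rfl⟩
  have hDt : D ≠ ⊤ := hD ▸ ofReal_ne_top
  have hgam' : ∀ k, Measurable fun p : ℝ × X => ∫⁻ s, g k p.1 s * a k s p.2 := fun k =>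
    meas_ga (g k) (hgm k) (a k) (ham k)
  have hawm : ∀ k, Measurable fun p : ℝ × X => a k p.1 p.2 * w k p.1 := fun k =>
    meas_aw (w k) (hwm k) (a k) (ham k)
  have hfin := final_split E J2 hE0 hJ2 hJ20 ω₀ τstep τ' hω hτ H W (hW 1 (by norm_num))
    (hW 7 (by norm_num))
  have hlast : D * ∫⁻ s, H s * W s ≤ _ := mul_le_mul_right hfin D
  refine le_trans ?_ (hlast.trans ?_)
  swap
  · rw [hD, mul_add, ← mul_assoc, ← mul_assoc, ← ENNReal.ofReal_mul (by positivity),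
      ← ENNReal.ofReal_mul (by positivity), ← mul_div_assoc, ← mul_div_assoc]
    gcongr <;> linarith
  calc _ ≤ ∫⁻ t in Set.Icc (τ' - 1) τ', ∫⁻ x, ENNReal.ofReal (2 * π) *
          ∑' k, (D * ∫⁻ s, g k t s * a k s x) ∂μ := by
        refine lintegral_mono fun t => lintegral_mono fun x => ?_
        refine (synthesis (fun k => lowPassFilter ζ (ω₀ * |(k.1 : ℝ)|) (fun s => azMode Ψ k.1 s x) t)).trans ?_
        gcongr with k
        rw [hD]
        exact filter_bound ζ C J hC hJ hK (lam k) t (lt_of_lt_of_le hω (hlam k)) _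
          ((azMode_measurable Ψ hm k.1).comp (by fun_prop : Measurable fun s : ℝ => (s, x)))
    _ = ENNReal.ofReal (2 * π) * D * ∑' k, ∫⁻ t in Set.Icc (τ' - 1) τ', ∫⁻ x, (∫⁻ s, g k t s * a k s x) ∂μ := by
        have e1 : ∀ t x, ENNReal.ofReal (2 * π) * ∑' k, (D * ∫⁻ s, g k t s * a k s x) =
            ENNReal.ofReal (2 * π) * D * ∑' k, ∫⁻ s, g k t s * a k s x := by
          intro t x
          rw [ENNReal.tsum_mul_left, mul_assoc]
        simp_rw [e1]
        have hne : ENNReal.ofReal (2 * π) * D ≠ ⊤ := ENNReal.mul_ne_top ofReal_ne_top hDt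
        simp_rw [lintegral_const_mul' _ _ hne]
        congr 1
        rw [← lintegral_tsum]
        · refine lintegral_congr fun t => ?_
          rw [← lintegral_tsum]
          exact fun k => ((hgam' k).comp (by fun_prop : Measurable fun x : X => (t, x))).aemeasurable
        · exact fun k => ((hgam' k).lintegral_prod_right').aemeasurable
    _ = ENNReal.ofReal (2 * π) * D * ∑' k, ∫⁻ s, ∫⁻ x, a k s x * w k s ∂μ := by
        congr 2; ext k
        exact swap_triple μ (volume.restrict (Set.Icc (τ' - 1) τ')) (g k) (hgm k) (a k) (ham k)
    _ = ENNReal.ofReal (2 * π) * D * ∫⁻ s, ∫⁻ x, ∑' k, a k s x * w k s ∂μ := by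
        congr 1
        rw [← lintegral_tsum]
        · refine lintegral_congr fun s => ?_
          rw [← lintegral_tsum]
          exact fun k => ((hawm k).comp (by fun_prop : Measurable fun x : X => (s, x))).aemeasurable
        · exact fun k => ((hawm k).lintegral_prod_right').aemeasurable
    _ = D * ∫⁻ s, ∫⁻ x, ENNReal.ofReal (2 * π) * ∑' k, a k s x * w k s ∂μ := by
        simp_rw [lintegral_const_mul' (ENNReal.ofReal (2 * π)) _ ofReal_ne_top]
        ring
    _ ≤ D * ∫⁻ s, H s * W s := by
        gcongr with s
        have hWt : W s ≠ ⊤ := ne_top_of_le_ne_top ofReal_ne_top (hW 1 (by norm_num) s)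
        rw [hH s, ← lintegral_mul_const' _ _ hWt]
        refine lintegral_mono fun x => ?_
        calc _ ≤ ENNReal.ofReal (2 * π) * ∑' k, a k s x * W s := by
              gcongr with k
              exact le_iSup (fun k => w k s) k
          _ = (ENNReal.ofReal (2 * π) * ∑' k, a k s x) * W s := by
              rw [ENNReal.tsum_mul_right, mul_assoc]
          _ ≤ _ := by
              gcongr
              exact hbes s x
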